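/- arXiv:cs/0609100 — 3 statements merged into one kernel-verified Lean document; each statement's English description precedes it below -/
import Mathlib

section
/- Let N ≥ 1, let X = Fin N → ℝ with inner product ⟨u,v⟩ = Σᵢ uᵢvᵢ and norm ‖u‖, let J : X → ℝ be nonnegative, convex, lower semicontinuous, positively 1-homogeneous, and satisfy the generalized co-area formula J(u) = ∫_ℝ J(χ_{u>t}) dt for all u ∈ X. Let λ > 0, f ∈ X, and suppose w ∈ X minimizes u ↦ J(u) + (1/(2λ))‖u − f‖² over X. Then for every s ∈ ℝ, the binary function θ = χ_{w≥s}, defined by θᵢ = 1 if wᵢ ≥ s and 0 otherwise, minimizes θ ↦ λ·J(θ) + Σᵢ (s − fᵢ)θᵢ over all θ ∈ X with θᵢ ∈ {0,1} for all i. -/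
open MeasureTheory

/-!
Put `p = (f - w) / lam`. Optimality of `w` says that `p` is a subgradient of `J` at `w`; as `J` is
positively homogeneous, this means `J w = p ⬝ᵥ w` and `p ⬝ᵥ u ≤ J u` for all `u`. Since `J`
vanishes on constants, the entries of `p` add up to `0`, so `u ↦ p ⬝ᵥ u` satisfies the co-area
formula and so does the nonnegative gap `u ↦ J u - p ⬝ᵥ u`. The gap vanishes at `w`, hence at
almost every upper level set of `w`, and the level sets of `w` are locally constant to the left
of `s`, so it vanishes at `χ_{w ≥ s}`. Therefore `lam * J θ + ∑ i, (s - f i) * θ i` lies above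
`∑ i, (s - w i) * θ i`, with equality at `χ_{w ≥ s}`, which minimizes that linear function.
-/

section Subgradient

variable {E : Type*} [AddCommGroup E] [Module ℝ E] {J : E → ℝ} {w : E}

lemma le_add_lineDeriv_of_isMinOn_add {g : E → ℝ} {d : ℝ} {s : Set E} {u : E}
    (hJ : ConvexOn ℝ s J) (hmin : IsMinOn (fun v => J v + g v) s w) (hws : w ∈ s) (hus : u ∈ s)
    (hg : HasLineDerivAt ℝ g d w (u - w)) : J w ≤ J u + d := by
  let φ : ℝ → ℝ := fun t => t * (J u - J w) + g (w + t • (u - w))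
  have hφ : HasDerivAt φ (J u - J w + d) 0 := by
    simpa using ((hasDerivAt_id (0 : ℝ)).mul_const (J u - J w)).fun_add hg
  have hφmin : IsMinOn φ (Set.Icc 0 1) 0 := by
    intro t ht
    have hpoint : w + t • (u - w) = (1 - t) • w + t • u := by module
    have hmem : w + t • (u - w) ∈ s :=
      hpoint ▸ hJ.1 hws hus (sub_nonneg.2 ht.2) ht.1 (sub_add_cancel 1 t)
    have hconv : J (w + t • (u - w)) ≤ (1 - t) * J w + t * J u :=
      hpoint ▸ hJ.2 hws hus (sub_nonneg.2 ht.2) ht.1 (sub_add_cancel 1 t)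
    have hle : J w + g w ≤ J (w + t • (u - w)) + g (w + t • (u - w)) := hmin hmem
    change φ 0 ≤ φ t
    simp only [φ, zero_mul, zero_smul, add_zero, zero_add]
    linarith
  have hcone : (1 : ℝ) ∈ posTangentConeAt (Set.Icc 0 1) 0 :=
    mem_posTangentConeAt_of_segment_subset (by simp [segment_eq_Icc])
  have hslope := hφmin.localize.hasFDerivWithinAt_nonneg hφ.hasFDerivAt.hasFDerivWithinAt hcone
  simp only [ContinuousLinearMap.toSpanSingleton_apply, one_smul] at hslope
  linarith

lemma subgradient_eq_and_le_of_posHomogeneous {p : Module.Dual ℝ E}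
    (hhom : ∀ c : ℝ, 0 ≤ c → J (c • w) = c * J w)
    (hsub : ∀ u, J w + p (u - w) ≤ J u) : p w = J w ∧ ∀ u, p u ≤ J u := by
  have hzero := hsub ((0 : ℝ) • w)
  have htwo := hsub ((2 : ℝ) • w)
  rw [hhom _ (by norm_num), map_sub, map_smul, smul_eq_mul] at hzero htwo
  have heq : p w = J w := by linarith
  refine ⟨heq, fun u => ?_⟩
  have hu := hsub u
  rw [map_sub] at hu
  linarith

end Subgradient

section LevelSets

variable {ι : Type*}

/-- The indicator `χ_{u > t}` of the strict upper level set of `u` at level `t`. -/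
noncomputable def upperLevelIndicator (u : ι → ℝ) (t : ℝ) : ι → ℝ :=
  fun i => if u i > t then 1 else 0

/-- The indicator `χ_{u ≥ t}` of the non-strict upper level set of `u` at level `t`. -/
noncomputable def closedUpperLevelIndicator (u : ι → ℝ) (t : ℝ) : ι → ℝ :=
  fun i => if u i ≥ t then 1 else 0

lemma upperLevelIndicator_smul {c : ℝ} (hc : 0 < c) (u : ι → ℝ) (t : ℝ) :
    upperLevelIndicator (c • u) t = upperLevelIndicator u (t / c) := by
  funext i
  simp [upperLevelIndicator, div_lt_iff₀' hc]

lemma exists_lt_forall_mem_Ioo_upperLevelIndicator_eq [Finite ι] (u : ι → ℝ) (s : ℝ) :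
    ∃ r < s, ∀ t ∈ Set.Ioo r s, upperLevelIndicator u t = closedUpperLevelIndicator u s := by
  have hev : ∀ᶠ t in nhdsWithin s (Set.Iio s), ∀ i, u i > t ↔ u i ≥ s := by
    rw [Filter.eventually_all]
    intro i
    rcases le_or_gt s (u i) with hi | hi
    · filter_upwards [self_mem_nhdsWithin] with t ht
      exact iff_of_true (lt_of_lt_of_le ht hi) hi
    · filter_upwards [mem_nhdsWithin_of_mem_nhds (Ioi_mem_nhds hi)] with t ht
      exact iff_of_false (lt_asymm ht) (not_le.2 hi)
  obtain ⟨r, hrs, hr⟩ := mem_nhdsLT_iff_exists_Ioo_subset.1 hev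
  refine ⟨r, hrs, fun t ht => funext fun i => ?_⟩
  simp only [upperLevelIndicator, closedUpperLevelIndicator, hr ht i]

lemma measurable_upperLevelIndicator (u : ι → ℝ) : Measurable (upperLevelIndicator u) :=
  measurable_pi_lambda _ fun _ =>
    Measurable.ite measurableSet_Iio measurable_const measurable_const

lemma finite_range_upperLevelIndicator [Finite ι] (u : ι → ℝ) :
    (Set.range (upperLevelIndicator u)).Finite := by
  refine (Set.Finite.pi' fun _ : ι => Set.toFinite ({0, 1} : Set ℝ)).subset ?_
  rintro _ ⟨t, rfl⟩ i
  unfold upperLevelIndicator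
  split_ifs <;> simp

lemma isMinOn_closedUpperLevelIndicator [Fintype ι] (w : ι → ℝ) (s : ℝ) :
    IsMinOn (fun θ : ι → ℝ => ∑ i, (s - w i) * θ i) (Set.Icc 0 1)
      (closedUpperLevelIndicator w s) := by
  intro θ hθ
  change ∑ i, (s - w i) * closedUpperLevelIndicator w s i ≤ ∑ i, (s - w i) * θ i
  refine Finset.sum_le_sum fun i _ => ?_
  have h0 : 0 ≤ θ i := hθ.1 i
  have h1 : θ i ≤ 1 := hθ.2 i
  unfold closedUpperLevelIndicator
  split_ifs <;> nlinarith

end LevelSets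

lemma integrable_and_integral_ite_gt_sub_ite_gt (a b : ℝ) :
    Integrable (fun t : ℝ => (if a > t then (1 : ℝ) else 0) - (if b > t then 1 else 0)) ∧
      ∫ t : ℝ, ((if a > t then (1 : ℝ) else 0) - (if b > t then 1 else 0)) = a - b := by
  have hsplit : (fun t : ℝ => (if a > t then (1 : ℝ) else 0) - (if b > t then 1 else 0)) =
      fun t => (Set.Ico b a).indicator 1 t - (Set.Ico a b).indicator 1 t := by
    funext t
    simp only [Set.indicator_apply, Set.mem_Ico, Pi.one_apply]
    grind
  have hint (x y : ℝ) : Integrable ((Set.Ico x y).indicator (1 : ℝ → ℝ)) :=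
    (integrable_indicator_iff measurableSet_Ico).2 (integrableOn_const (by simp))
  rw [hsplit]
  refine ⟨(hint b a).sub (hint a b), ?_⟩
  rw [integral_sub (hint b a) (hint a b), integral_indicator_one measurableSet_Ico,
    integral_indicator_one measurableSet_Ico, Real.volume_real_Ico, Real.volume_real_Ico]
  grind

-- Pitfall: unless `a = b = 0` the function is not integrable, and its Bochner integral is `0`
-- by convention.
lemma integral_ite_gt_eq_zero (a b c : ℝ) : ∫ t : ℝ, (if c > t then a else b) = 0 := by
  by_cases hint : Integrable fun t : ℝ => if c > t then a else b
  · have ha : IntegrableOn (fun _ : ℝ => a) (Set.Iio c) :=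
      hint.integrableOn.congr_fun (fun t (ht : t < c) => if_pos ht) measurableSet_Iio
    have hb : IntegrableOn (fun _ : ℝ => b) (Set.Ici c) :=
      hint.integrableOn.congr_fun (fun t (ht : c ≤ t) => if_neg ht.not_gt) measurableSet_Ici
    rw [integrableOn_const_iff] at ha hb
    have ha0 : a = 0 := by simpa using ha
    have hb0 : b = 0 := by simpa using hb
    simp [ha0, hb0]
  · exact integral_undef hint

/-- The generalized co-area formula `J u = ∫ J (χ_{u > t}) dt` for all `u`. Integrability of
the right-hand side is a consequence (`SatisfiesCoarea.integrable`), so that the Bochner integral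
is not a junk value. -/
def SatisfiesCoarea {ι : Type*} (J : (ι → ℝ) → ℝ) : Prop :=
  ∀ u, J u = ∫ t : ℝ, J (upperLevelIndicator u t)

namespace SatisfiesCoarea

variable {ι : Type*} {J K : (ι → ℝ) → ℝ}

lemma map_const (hJ : SatisfiesCoarea J) (c : ℝ) : J (fun _ => c) = 0 := by
  have hstep (t : ℝ) : J (upperLevelIndicator (fun _ => c) t) =
      if c > t then J (fun _ => 1) else J (fun _ => 0) := by
    unfold upperLevelIndicator
    split_ifs <;> rfl
  rw [hJ]
  simp only [hstep, integral_ite_gt_eq_zero]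

lemma map_smul (hJ : SatisfiesCoarea J) {c : ℝ} (hc : 0 ≤ c) (u : ι → ℝ) :
    J (c • u) = c * J u := by
  rcases hc.eq_or_lt with rfl | hc
  · rw [zero_smul, zero_mul]
    exact hJ.map_const 0
  · rw [hJ (c • u), hJ u]
    simp only [upperLevelIndicator_smul hc]
    rw [Measure.integral_comp_div (fun t => J (upperLevelIndicator u t)), abs_of_pos hc,
      smul_eq_mul]

lemma support_subset_Icc (hJ : SatisfiesCoarea J) {u : ι → ℝ} {m M : ℝ}
    (hm : ∀ i, m ≤ u i) (hM : ∀ i, u i ≤ M) :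
    (Function.support fun t => J (upperLevelIndicator u t)) ⊆ Set.Icc m M := by
  intro t ht
  by_contra hmem
  rw [Set.mem_Icc, not_and_or, not_le, not_le] at hmem
  refine ht ?_
  change J (upperLevelIndicator u t) = 0
  rcases hmem with htm | hMt
  · have hone : upperLevelIndicator u t = fun _ => 1 :=
      funext fun i => if_pos (htm.trans_le (hm i))
    rw [hone, hJ.map_const]
  · have hzero : upperLevelIndicator u t = fun _ => 0 :=
      funext fun i => if_neg ((hM i).trans_lt hMt).not_gt
    rw [hzero, hJ.map_const]

lemma integrable [Finite ι] (hJ : SatisfiesCoarea J) (u : ι → ℝ) :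
    Integrable fun t => J (upperLevelIndicator u t) := by
  let X : SimpleFunc ℝ (ι → ℝ) :=
    ⟨upperLevelIndicator u,
      fun y => measurable_upperLevelIndicator u (measurableSet_singleton y),
      finite_range_upperLevelIndicator u⟩
  obtain ⟨m, hm⟩ := (Set.finite_range u).bddBelow
  obtain ⟨M, hM⟩ := (Set.finite_range u).bddAbove
  have hsupp := hJ.support_subset_Icc (fun i => hm ⟨i, rfl⟩) (fun i => hM ⟨i, rfl⟩)
  exact SimpleFunc.integrable_iff_finMeasSupp (f := X.map J).2 <|
    SimpleFunc.finMeasSupp_iff_support.2 ((measure_mono hsupp).trans_lt measure_Icc_lt_top)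

lemma sub [Finite ι] (hJ : SatisfiesCoarea J) (hK : SatisfiesCoarea K) :
    SatisfiesCoarea fun u => J u - K u := fun u => by
  rw [integral_sub (hJ.integrable u) (hK.integrable u), ← hJ u, ← hK u]

lemma map_closedUpperLevelIndicator_eq_zero [Finite ι] (hJ : SatisfiesCoarea J)
    (hnonneg : ∀ u, 0 ≤ J u) {u : ι → ℝ} (hu : J u = 0) (s : ℝ) :
    J (closedUpperLevelIndicator u s) = 0 := by
  have hae : ∀ᵐ t : ℝ, J (upperLevelIndicator u t) = 0 :=
    (integral_eq_zero_iff_of_nonneg (fun _ => hnonneg _) (hJ.integrable u)).1 ((hJ u).symm.trans hu)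
  obtain ⟨r, hrs, hr⟩ := exists_lt_forall_mem_Ioo_upperLevelIndicator_eq u s
  obtain ⟨t, ht, hrt⟩ := (Measure.dense_of_ae hae).exists_between hrs
  exact hr t hrt ▸ ht

end SatisfiesCoarea

section DotProduct

variable {ι : Type*} [Fintype ι]

lemma satisfiesCoarea_dotProduct {p : ι → ℝ} (hp : ∑ i, p i = 0) :
    SatisfiesCoarea fun u => p ⬝ᵥ u := by
  intro u
  -- As `∑ i, p i = 0`, subtracting `χ_{0 > t}` changes nothing; it makes each summand integrable.
  have hshift (t : ℝ) : p ⬝ᵥ upperLevelIndicator u t =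
      ∑ i, p i * ((if u i > t then (1 : ℝ) else 0) - (if 0 > t then 1 else 0)) := by
    simp [mul_sub, Finset.sum_sub_distrib, hp, dotProduct, upperLevelIndicator]
  have hcoord (i : ι) := integrable_and_integral_ite_gt_sub_ite_gt (u i) 0
  simp only [hshift]
  rw [integral_finsetSum _ fun i _ => (hcoord i).1.const_mul (p i)]
  simp only [integral_const_mul, (hcoord _).2, sub_zero, dotProduct]

lemma SatisfiesCoarea.sum_eq_zero_of_dotProduct_le {J : (ι → ℝ) → ℝ} (hJ : SatisfiesCoarea J)
    {p : ι → ℝ} (hp : ∀ u, p ⬝ᵥ u ≤ J u) : ∑ i, p i = 0 := by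
  have hone := hp fun _ => 1
  have hneg := hp fun _ => -1
  rw [hJ.map_const] at hone hneg
  simp only [dotProduct, mul_one, mul_neg, Finset.sum_neg_distrib] at hone hneg
  linarith

lemma hasLineDerivAt_mul_sum_sub_sq (c : ℝ) (f w v : ι → ℝ) :
    HasLineDerivAt ℝ (fun u : ι → ℝ => c * ∑ i, (u i - f i) ^ 2)
      (2 * c * ((w - f) ⬝ᵥ v)) w v := by
  have hcoord (i : ι) : HasDerivAt (fun t : ℝ => ((w + t • v) i - f i) ^ 2)
      (2 * ((w - f) i * v i)) 0 := by
    have hline : HasDerivAt (fun t : ℝ => w i + t * v i - f i) (v i) 0 := by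
      simpa using (((hasDerivAt_id (0 : ℝ)).mul_const (v i)).const_add (w i)).sub_const (f i)
    simpa [mul_assoc] using hline.fun_pow 2
  have hsum := (HasDerivAt.fun_sum fun i (_ : i ∈ Finset.univ) => hcoord i).const_mul c
  rw [← Finset.mul_sum, ← mul_assoc, mul_comm c] at hsum
  exact hsum

lemma add_dotProduct_le_of_isMinOn_add_sum_sq {J : (ι → ℝ) → ℝ} (hJ : ConvexOn ℝ Set.univ J)
    {lam : ℝ} {f w : ι → ℝ}
    (hw : IsMinOn (fun u => J u + (1 / (2 * lam)) * ∑ i, (u i - f i) ^ 2) Set.univ w)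
    (u : ι → ℝ) : J w + (lam⁻¹ • (f - w)) ⬝ᵥ (u - w) ≤ J u := by
  have hle := le_add_lineDeriv_of_isMinOn_add hJ hw (Set.mem_univ w) (Set.mem_univ u)
    (hasLineDerivAt_mul_sum_sub_sq (1 / (2 * lam)) f w (u - w))
  have hcoef : 2 * (1 / (2 * lam)) = lam⁻¹ := by
    rw [one_div, mul_inv, mul_inv_cancel_left₀ two_ne_zero]
  rw [hcoef, ← neg_sub f w, neg_dotProduct] at hle
  rw [smul_dotProduct, smul_eq_mul]
  linarith

end DotProduct

theorem threshold_nonstrict_solves_shape_optimization_general {ι : Type*} [Fintype ι]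
    {J : (ι → ℝ) → ℝ} (hconvex : ConvexOn ℝ Set.univ J) (hcoarea : SatisfiesCoarea J)
    {lam : ℝ} (hlam : 0 < lam) {f w : ι → ℝ}
    (hw : IsMinOn (fun u => J u + (1 / (2 * lam)) * ∑ i, (u i - f i) ^ 2) Set.univ w) (s : ℝ) :
    IsMinOn (fun θ => lam * J θ + ∑ i, (s - f i) * θ i) (Set.Icc 0 1)
      (closedUpperLevelIndicator w s) := by
  set p : ι → ℝ := lam⁻¹ • (f - w) with hp
  obtain ⟨hpw, hple⟩ : p ⬝ᵥ w = J w ∧ ∀ u, p ⬝ᵥ u ≤ J u :=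
    subgradient_eq_and_le_of_posHomogeneous (p := dotProductBilin ℝ ℝ p)
      (fun _ hc => hcoarea.map_smul hc w) (add_dotProduct_le_of_isMinOn_add_sum_sq hconvex hw)
  have hgap : J (closedUpperLevelIndicator w s) - p ⬝ᵥ closedUpperLevelIndicator w s = 0 :=
    (hcoarea.sub (satisfiesCoarea_dotProduct (hcoarea.sum_eq_zero_of_dotProduct_le hple)))
      |>.map_closedUpperLevelIndicator_eq_zero (fun u => sub_nonneg.2 (hple u))
        (sub_eq_zero.2 hpw.symm) s
  have hlinear (θ : ι → ℝ) :
      ∑ i, (s - w i) * θ i = lam * p ⬝ᵥ θ + ∑ i, (s - f i) * θ i := by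
    rw [hp, smul_dotProduct, smul_eq_mul, mul_inv_cancel_left₀ hlam.ne', dotProduct,
      ← Finset.sum_add_distrib]
    exact Finset.sum_congr rfl fun i _ => by simp only [Pi.sub_apply]; ring
  intro θ hθ
  calc lam * J (closedUpperLevelIndicator w s) + ∑ i, (s - f i) * closedUpperLevelIndicator w s i
      = ∑ i, (s - w i) * closedUpperLevelIndicator w s i := by
        rw [hlinear, sub_eq_zero.1 hgap]
    _ ≤ ∑ i, (s - w i) * θ i := isMinOn_closedUpperLevelIndicator w s hθ
    _ = lam * p ⬝ᵥ θ + ∑ i, (s - f i) * θ i := hlinear θ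
    _ ≤ lam * J θ + ∑ i, (s - f i) * θ i := by gcongr; exact hple θ

/-- Thresholding the ROF minimizer at level `s` (strict upper level set) solves the
discrete shape optimization problem. -/
theorem threshold_nonstrict_solves_shape_optimization
    (N : ℕ) (hN : 1 ≤ N)
    (J : (Fin N → ℝ) → ℝ)
    (hJnonneg : ∀ u, 0 ≤ J u)
    (hJconvex : ConvexOn ℝ Set.univ J)
    (hJlsc : LowerSemicontinuous J)
    (hJhom : ∀ t : ℝ, 0 ≤ t → ∀ u : Fin N → ℝ, J (t • u) = t * J u)
    (hJcoarea : ∀ u : Fin N → ℝ,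
      J u = ∫ t : ℝ, J (fun i => if u i > t then (1 : ℝ) else 0))
    (lam : ℝ) (hlam : 0 < lam) (f : Fin N → ℝ) (w : Fin N → ℝ)
    (hw : ∀ u : Fin N → ℝ,
      J w + (1 / (2 * lam)) * ∑ i, (w i - f i) ^ 2 ≤
      J u + (1 / (2 * lam)) * ∑ i, (u i - f i) ^ 2)
    (s : ℝ) :
    ∀ θ : Fin N → ℝ, (∀ i, θ i = 0 ∨ θ i = 1) →
      lam * J (fun i => if w i ≥ s then (1 : ℝ) else 0) +
          ∑ i, (s - f i) * (if w i ≥ s then (1 : ℝ) else 0) ≤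
        lam * J θ + ∑ i, (s - f i) * θ i := by
  intro θ hθ
  refine threshold_nonstrict_solves_shape_optimization_general hJconvex hJcoarea hlam
    (fun u _ => hw u) s ⟨fun i => ?_, fun i => ?_⟩ <;> rcases hθ i with h | h <;> simp [h]
end

section
/- Let n, m ≥ 1, let g : Fin n × Fin m → ℝ with g ≥ 0, and let TV_{1,π/4,g} be the g-weighted Manhattan total variation with diagonal terms. Then TV_{1,π/4,g} satisfies the generalized co-area formula: for every u : Fin n × Fin m → ℝ, TV_{1,π/4,g}(u) = ∫_ℝ TV_{1,π/4,g}(χ_{u>t}) dt, where (χ_{u>t})_{i,j} = 1 if u_{i,j} > t and 0 otherwise. -/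
open MeasureTheory

/-- Discrete gradient in the x-direction with Neumann boundary conditions. -/
def gradX {n m : ℕ} (u : Fin n × Fin m → ℝ) (q : Fin n × Fin m) : ℝ :=
  if h : (q.1 : ℕ) + 1 < n then u (⟨(q.1 : ℕ) + 1, h⟩, q.2) - u q else 0

/-- Discrete gradient in the y-direction with Neumann boundary conditions. -/
def gradY {n m : ℕ} (u : Fin n × Fin m → ℝ) (q : Fin n × Fin m) : ℝ :=
  if h : (q.2 : ℕ) + 1 < m then u (q.1, ⟨(q.2 : ℕ) + 1, h⟩) - u q else 0

/-- Discrete diagonal gradient (direction (1,1)) with Neumann boundary conditions. -/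
noncomputable def gradXY {n m : ℕ} (u : Fin n × Fin m → ℝ) (q : Fin n × Fin m) : ℝ :=
  if h : (q.1 : ℕ) + 1 < n ∧ (q.2 : ℕ) + 1 < m then
    (Real.sqrt 2)⁻¹ * (u (⟨(q.1 : ℕ) + 1, h.1⟩, ⟨(q.2 : ℕ) + 1, h.2⟩) - u q)
  else 0

/-- Discrete diagonal gradient (direction (-1,1)) with Neumann boundary conditions. -/
noncomputable def gradYX {n m : ℕ} (u : Fin n × Fin m → ℝ) (q : Fin n × Fin m) : ℝ :=
  if h : 0 < (q.1 : ℕ) ∧ (q.2 : ℕ) + 1 < m then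
    (Real.sqrt 2)⁻¹ *
      (u (⟨(q.1 : ℕ) - 1, lt_of_le_of_lt (Nat.sub_le _ _) q.1.isLt⟩,
          ⟨(q.2 : ℕ) + 1, h.2⟩) - u q)
  else 0

/-- The g-weighted Manhattan total variation with diagonal terms. -/
noncomputable def wTV {n m : ℕ} (g : Fin n × Fin m → ℝ) (u : Fin n × Fin m → ℝ) : ℝ :=
  (1 / 2) * ∑ q : Fin n × Fin m,
    g q * (|gradX u q| + |gradY u q| + |gradXY u q| + |gradYX u q|)

/-! The functionals satisfying the co-area formula form a real vector space, so it suffices to treat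
`u ↦ |u p - u q|`. For real `a`, `b`, the function `t ↦ |χ_{a > t} - χ_{b > t}|` is the indicator of
the interval between `a` and `b`, whose integral is `|a - b|`. -/

section SuperlevelIndicator

variable {ι : Type*}

/-- The indicator `χ_{u > t}` of the strict superlevel set of `u` at height `t`. -/
noncomputable def superlevelIndicator (u : ι → ℝ) (t : ℝ) : ι → ℝ :=
  fun i => if u i > t then 1 else 0

theorem abs_superlevelIndicator_sub_eq_indicator (u : ι → ℝ) (p q : ι) :
    (fun t => |superlevelIndicator u t p - superlevelIndicator u t q|) =
      (Set.Ico (min (u p) (u q)) (max (u p) (u q))).indicator 1 := by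
  ext t
  by_cases hp : t < u p <;> by_cases hq : t < u q <;>
    simp [superlevelIndicator, hp, hq, not_le.mpr, not_lt.mp]

theorem integrable_abs_superlevelIndicator_sub (u : ι → ℝ) (p q : ι) :
    Integrable fun t => |superlevelIndicator u t p - superlevelIndicator u t q| := by
  rw [abs_superlevelIndicator_sub_eq_indicator, integrable_indicator_iff measurableSet_Ico]
  exact integrableOn_const measure_Ico_lt_top.ne

theorem integral_abs_superlevelIndicator_sub (u : ι → ℝ) (p q : ι) :
    ∫ t, |superlevelIndicator u t p - superlevelIndicator u t q| = |u p - u q| := by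
  rw [abs_superlevelIndicator_sub_eq_indicator, integral_indicator_one measurableSet_Ico,
    Real.volume_real_Ico_of_le min_le_max, max_sub_min_eq_abs']

end SuperlevelIndicator

/-- The generalized co-area formula `F u = ∫ F (χ_{u > t}) dt` for a functional `F` on real-valued
functions. Integrability of the integrand is part of the notion, so that the equation cannot hold
through the junk value `0` of a divergent integral. -/
structure SatisfiesCoarea_s5 {ι : Type*} (F : (ι → ℝ) → ℝ) : Prop where
  integrable (u : ι → ℝ) : Integrable fun t => F (superlevelIndicator u t)
  integral_eq (u : ι → ℝ) : ∫ t, F (superlevelIndicator u t) = F u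

namespace SatisfiesCoarea_s5

variable {ι : Type*} {F G : (ι → ℝ) → ℝ}

theorem zero : SatisfiesCoarea_s5 fun _ : ι → ℝ => 0 where
  integrable _ := integrable_zero _ _ _
  integral_eq _ := integral_zero _ _

theorem add (hF : SatisfiesCoarea_s5 F) (hG : SatisfiesCoarea_s5 G) :
    SatisfiesCoarea_s5 fun u => F u + G u where
  integrable u := (hF.integrable u).add (hG.integrable u)
  integral_eq u := by
    rw [integral_add (hF.integrable u) (hG.integrable u), hF.integral_eq, hG.integral_eq]

theorem const_mul (c : ℝ) (hF : SatisfiesCoarea_s5 F) : SatisfiesCoarea_s5 fun u => c * F u where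
  integrable u := (hF.integrable u).const_mul c
  integral_eq u := by rw [integral_const_mul, hF.integral_eq]

theorem sum {κ : Type*} {s : Finset κ} {F : κ → (ι → ℝ) → ℝ}
    (hF : ∀ k ∈ s, SatisfiesCoarea_s5 (F k)) : SatisfiesCoarea_s5 fun u => ∑ k ∈ s, F k u where
  integrable u := integrable_finsetSum s fun k hk => (hF k hk).integrable u
  integral_eq u := by
    rw [integral_finsetSum s fun k hk => (hF k hk).integrable u]
    exact Finset.sum_congr rfl fun k hk => (hF k hk).integral_eq u

theorem abs_sub (p q : ι) : SatisfiesCoarea_s5 fun u : ι → ℝ => |u p - u q| where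
  integrable u := integrable_abs_superlevelIndicator_sub u p q
  integral_eq u := integral_abs_superlevelIndicator_sub u p q

theorem abs_const_mul_sub (c : ℝ) (p q : ι) :
    SatisfiesCoarea_s5 fun u : ι → ℝ => |c * (u p - u q)| := by
  simp only [abs_mul]
  exact (abs_sub p q).const_mul |c|

end SatisfiesCoarea_s5

section Gradients

variable {n m : ℕ} (q : Fin n × Fin m)

theorem satisfiesCoarea_abs_gradX : SatisfiesCoarea_s5 fun u => |gradX u q| := by
  unfold gradX
  split_ifs
  · exact .abs_sub _ _
  · simpa only [abs_zero] using .zero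

theorem satisfiesCoarea_abs_gradY : SatisfiesCoarea_s5 fun u => |gradY u q| := by
  unfold gradY
  split_ifs
  · exact .abs_sub _ _
  · simpa only [abs_zero] using .zero

theorem satisfiesCoarea_abs_gradXY : SatisfiesCoarea_s5 fun u => |gradXY u q| := by
  unfold gradXY
  split_ifs
  · exact .abs_const_mul_sub _ _ _
  · simpa only [abs_zero] using .zero

theorem satisfiesCoarea_abs_gradYX : SatisfiesCoarea_s5 fun u => |gradYX u q| := by
  unfold gradYX
  split_ifs
  · exact .abs_const_mul_sub _ _ _
  · simpa only [abs_zero] using .zero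

end Gradients

theorem wTV_coarea_general {n m : ℕ} (g : Fin n × Fin m → ℝ) : SatisfiesCoarea_s5 (wTV g) :=
  .const_mul (1 / 2) <| .sum fun q _ => .const_mul (g q) <|
    satisfiesCoarea_abs_gradX q |>.add (satisfiesCoarea_abs_gradY q)
      |>.add (satisfiesCoarea_abs_gradXY q) |>.add (satisfiesCoarea_abs_gradYX q)

/-- The weighted Manhattan TV with diagonal terms satisfies the generalized
co-area formula. -/
theorem wTV_coarea (n m : ℕ) (hn : 1 ≤ n) (hm : 1 ≤ m)
    (g : Fin n × Fin m → ℝ) (hg : ∀ q, 0 ≤ g q)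
    (u : Fin n × Fin m → ℝ) :
    wTV g u = ∫ t : ℝ, wTV g (fun q => if u q > t then (1 : ℝ) else 0) :=
  ((wTV_coarea_general g).integral_eq u).symm
end

section
/- Let n, m ≥ 1, g : Fin n × Fin m → ℝ with g ≥ 0, λ > 0, and w₀ : Fin n × Fin m → ℝ. Let v̄ be the (unique) point of the nonempty compact convex set λK = { (λ/2)(div(g·ξ) + div'(g·η)) : ξ, η ∈ A } nearest to w₀ in the Euclidean norm. Then w̄ = w₀ − v̄ is the unique minimizer over all w of the energy TV_{1,π/4,g}(w) + (1/(2λ))‖w − w₀‖². -/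
/-- The discrete divergence: the negative adjoint of the gradient `(∇ˣ, ∇ʸ)`. -/
def divv {n m : ℕ} (px py : Fin n × Fin m → ℝ) (q : Fin n × Fin m) : ℝ :=
  (if (q.1 : ℕ) + 1 < n then px q else 0) -
    (if 0 < (q.1 : ℕ) then
      px (⟨(q.1 : ℕ) - 1, lt_of_le_of_lt (Nat.sub_le _ _) q.1.isLt⟩, q.2) else 0) +
  (if (q.2 : ℕ) + 1 < m then py q else 0) -
    (if 0 < (q.2 : ℕ) then
      py (q.1, ⟨(q.2 : ℕ) - 1, lt_of_le_of_lt (Nat.sub_le _ _) q.2.isLt⟩) else 0)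

/-- The diagonal discrete divergence: the negative adjoint of the diagonal
gradient pair `(∇^{xy}, ∇^{yx})`. -/
noncomputable def divv' {n m : ℕ} (f1 f2 : Fin n × Fin m → ℝ) (q : Fin n × Fin m) : ℝ :=
  (Real.sqrt 2)⁻¹ *
    ((if (q.1 : ℕ) + 1 < n ∧ (q.2 : ℕ) + 1 < m then f1 q else 0) -
      (if 0 < (q.1 : ℕ) ∧ 0 < (q.2 : ℕ) then
        f1 (⟨(q.1 : ℕ) - 1, lt_of_le_of_lt (Nat.sub_le _ _) q.1.isLt⟩,
            ⟨(q.2 : ℕ) - 1, lt_of_le_of_lt (Nat.sub_le _ _) q.2.isLt⟩) else 0) +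
      (if 0 < (q.1 : ℕ) ∧ (q.2 : ℕ) + 1 < m then f2 q else 0) -
      (if h : (q.1 : ℕ) + 1 < n ∧ 0 < (q.2 : ℕ) then
        f2 (⟨(q.1 : ℕ) + 1, h.1⟩,
            ⟨(q.2 : ℕ) - 1, lt_of_le_of_lt (Nat.sub_le _ _) q.2.isLt⟩) else 0))

/-!
The total variation `J` is a maximum of linear functionals: by summation by parts, `lam * J` is the
support function of the convex set `λK`. The variational inequality at the nearest point `v̄` says
that `v̄` realises this maximum at `w₀ - v̄`; at any other `w` it only gives a lower bound for it.
Completing the square, the energy at `w` exceeds the energy at `w₀ - v̄` by at least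
`‖w - (w₀ - v̄)‖² / (2 * lam)`, which gives minimality and uniqueness at once.
-/

open Metric WithLp
open scoped Matrix RealInnerProductSpace

theorem isMin_and_unique_of_quadratic_growth {E : Type*} [NormedAddCommGroup E] {f : E → ℝ}
    {c : ℝ} {x : E} (hc : 0 < c) (hf : ∀ y, f x + c * ‖y - x‖ ^ 2 ≤ f y) :
    (∀ y, f x ≤ f y) ∧ ∀ y, (∀ z, f y ≤ f z) → y = x := by
  refine ⟨fun y => (le_add_of_nonneg_right (by positivity)).trans (hf y), fun y hy => ?_⟩
  by_contra hne
  have hpos : 0 < c * ‖y - x‖ ^ 2 := by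
    have := norm_pos_iff.2 (sub_ne_zero.2 hne)
    positivity
  linarith [hf y, hy x]

section SupportFunction

variable {E : Type*} [NormedAddCommGroup E] [InnerProductSpace ℝ E]

/-- `J` is the support function `x ↦ sup_{v ∈ K} ⟪v, x⟫` of `K`. -/
def IsSupportFunction (K : Set E) (J : E → ℝ) : Prop :=
  ∀ x, IsLUB ((fun v => ⟪v, x⟫) '' K) (J x)

variable {K : Set E} {J : E → ℝ} {p v x : E}

theorem IsSupportFunction.inner_le (hJ : IsSupportFunction K J) (hv : v ∈ K) (x : E) :
    ⟪v, x⟫ ≤ J x :=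
  (hJ x).1 (Set.mem_image_of_mem _ hv)

theorem inner_sub_sub_nonpos_of_isMinOn (hK : Convex ℝ K) (hp : p ∈ K)
    (hmin : IsMinOn (fun v => ‖x - v‖) K p) (hv : v ∈ K) : ⟪x - p, v - p⟫ ≤ 0 := by
  have : Nonempty K := ⟨⟨p, hp⟩⟩
  have hinf : ‖x - p‖ = ⨅ v : K, ‖x - v‖ :=
    le_antisymm (le_ciInf fun v => hmin v.2)
      (ciInf_le ⟨0, Set.forall_mem_range.2 fun _ => norm_nonneg _⟩ (⟨p, hp⟩ : K))
  exact (norm_eq_iInf_iff_real_inner_le_zero hK hp).1 hinf v hv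

theorem IsSupportFunction.apply_sub_le_inner_of_isMinOn (hJ : IsSupportFunction K J)
    (hK : Convex ℝ K) (hp : p ∈ K) (hmin : IsMinOn (fun v => ‖x - v‖) K p) :
    J (x - p) ≤ ⟪p, x - p⟫ := by
  refine (hJ (x - p)).2 (Set.forall_mem_image.2 fun v hv => ?_)
  have hvar := inner_sub_sub_nonpos_of_isMinOn hK hp hmin hv
  rw [real_inner_comm, inner_sub_left] at hvar
  exact sub_nonpos.1 hvar

theorem IsSupportFunction.quadratic_growth {lam : ℝ} (hlam : 0 < lam)
    (hJ : IsSupportFunction K (fun x => lam * J x)) (hK : Convex ℝ K) (hp : p ∈ K)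
    (hmin : IsMinOn (fun v => ‖x - v‖) K p) (y : E) :
    J (x - p) + 1 / (2 * lam) * ‖x - p - x‖ ^ 2 + 1 / (2 * lam) * ‖y - (x - p)‖ ^ 2 ≤
      J y + 1 / (2 * lam) * ‖y - x‖ ^ 2 := by
  have hxp : lam * J (x - p) ≤ ⟪p, x - p⟫ := hJ.apply_sub_le_inner_of_isMinOn hK hp hmin
  have hy : ⟪p, y⟫ ≤ lam * J y := hJ.inner_le hp y
  have hsq : ‖y - (x - p)‖ ^ 2 = ‖y - x‖ ^ 2 + 2 * (⟪p, y⟫ - ⟪p, x⟫) + ‖p‖ ^ 2 := by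
    rw [← sub_add, norm_add_sq_real, real_inner_comm, inner_sub_right]
  have hinner : ⟪p, x - p⟫ = ⟪p, x⟫ - ‖p‖ ^ 2 := by
    rw [inner_sub_right, real_inner_self_eq_norm_sq]
  rw [hsq, sub_sub_cancel_left, norm_neg]
  refine le_of_mul_le_mul_left ?_ hlam
  field_simp
  linarith

theorem IsSupportFunction.sub_isMin_and_unique {lam : ℝ} (hlam : 0 < lam)
    (hJ : IsSupportFunction K (fun x => lam * J x)) (hK : Convex ℝ K) (hp : p ∈ K)
    (hmin : IsMinOn (fun v => ‖x - v‖) K p) :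
    (∀ y, J (x - p) + 1 / (2 * lam) * ‖x - p - x‖ ^ 2 ≤ J y + 1 / (2 * lam) * ‖y - x‖ ^ 2) ∧
      ∀ y, (∀ z, J y + 1 / (2 * lam) * ‖y - x‖ ^ 2 ≤ J z + 1 / (2 * lam) * ‖z - x‖ ^ 2) →
        y = x - p :=
  isMin_and_unique_of_quadratic_growth (f := fun y => J y + 1 / (2 * lam) * ‖y - x‖ ^ 2)
    (one_div_pos.2 (mul_pos two_pos hlam)) (hJ.quadratic_growth hlam hK hp hmin)

end SupportFunction

section DualBall

variable {ι κ : Type*} [Fintype κ]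

theorem isGreatest_dotProduct_closedBall (a : κ → ℝ) :
    IsGreatest ((· ⬝ᵥ a) '' closedBall 0 1) (∑ k, |a k|) := by
  refine ⟨⟨fun k => (SignType.sign (a k) : ℝ), ?_, ?_⟩, ?_⟩
  · rw [mem_closedBall_zero_iff, pi_norm_le_iff_of_nonneg zero_le_one]
    intro k
    cases SignType.sign (a k) <;> simp
  · simp [dotProduct]
  · rintro _ ⟨ξ, hξ, rfl⟩
    rw [mem_closedBall_zero_iff, pi_norm_le_iff_of_nonneg zero_le_one] at hξ
    refine Finset.sum_le_sum fun k _ => (le_abs_self _).trans ?_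
    rw [abs_mul]
    exact mul_le_of_le_one_left (abs_nonneg _) (hξ k)

/-- The set of all `Dᵀ (c ξ)` with `|ξ k| ≤ 1` for every `k`, whose support function for `0 ≤ c` is
the weighted anisotropic seminorm `u ↦ ∑ k, c k * |(D u) k|`. The unit ball of `κ → ℝ` is that of the
supremum norm, while the ambient space of the dual ball is Euclidean. -/
def dualBall (c : κ → ℝ) (D : Matrix κ ι ℝ) : Set (EuclideanSpace ℝ ι) :=
  (fun ξ : κ → ℝ => toLp 2 ((c * ξ) ᵥ* D)) '' closedBall 0 1

theorem convex_dualBall (c : κ → ℝ) (D : Matrix κ ι ℝ) : Convex ℝ (dualBall c D) :=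
  (convex_closedBall 0 1).is_linear_image
    { map_add := fun ξ η => by rw [mul_add, Matrix.add_vecMul, toLp_add]
      map_smul := fun t ξ => by rw [mul_smul_comm, Matrix.smul_vecMul, toLp_smul] }

theorem isSupportFunction_dualBall [Fintype ι] {c : κ → ℝ} (hc : 0 ≤ c) (D : Matrix κ ι ℝ) :
    IsSupportFunction (dualBall c D) (fun u => ∑ k, c k * |(D *ᵥ ofLp u) k|) := by
  intro u
  have hinner : ∀ ξ : κ → ℝ, ⟪toLp 2 ((c * ξ) ᵥ* D), u⟫ = ξ ⬝ᵥ (c * (D *ᵥ ofLp u)) := by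
    intro ξ
    rw [EuclideanSpace.inner_eq_star_dotProduct, star_trivial, dotProduct_comm,
      ← Matrix.dotProduct_mulVec]
    exact Finset.sum_congr rfl fun k _ => by simp only [Pi.mul_apply]; ring
  have habs : ∀ k, c k * |(D *ᵥ ofLp u) k| = |(c * (D *ᵥ ofLp u)) k| := fun k => by
    rw [Pi.mul_apply, abs_mul, abs_of_nonneg (hc k)]
  simp only [dualBall, Set.image_image, hinner, habs]
  exact (isGreatest_dotProduct_closedBall _).isLUB

end DualBall

section ForwardDifference

variable {α α' β β' : Type*}

/-- The componentwise product of two partial equivalences. -/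
def prodPEquiv (σ : α ≃. α') (τ : β ≃. β') : α × β ≃. α' × β' where
  toFun q := (σ q.1).bind fun a => (τ q.2).map fun b => (a, b)
  invFun q := (σ.symm q.1).bind fun a => (τ.symm q.2).map fun b => (a, b)
  inv := by
    rintro ⟨a, b⟩ ⟨a', b'⟩
    simp [Option.bind_eq_some_iff, PEquiv.eq_some_iff]

theorem prodPEquiv_apply (σ : α ≃. α') (τ : β ≃. β') (q : α × β) :
    prodPEquiv σ τ q = (σ q.1).bind fun a => (τ q.2).map fun b => (a, b) :=
  rfl

theorem prodPEquiv_symm (σ : α ≃. α') (τ : β ≃. β') :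
    (prodPEquiv σ τ).symm = prodPEquiv σ.symm τ.symm :=
  rfl

variable {R : Type*}

theorem toMatrix_mulVec_apply [NonAssocSemiring R] [Fintype β] [DecidableEq β] (σ : α ≃. β)
    (u : β → R) (i : α) : (σ.toMatrix *ᵥ u) i = (σ i).elim 0 u := by
  rcases h : σ i with - | j <;> simp [Matrix.mulVec, dotProduct, h]

theorem vecMul_toMatrix_apply [NonAssocSemiring R] [Fintype α] [DecidableEq β] (p : α → R)
    (σ : α ≃. β) (j : β) : (p ᵥ* σ.toMatrix) j = (σ.symm j).elim 0 p := by
  classical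
  rcases h : σ.symm j with - | i <;> simp [Matrix.vecMul, dotProduct, ← σ.eq_some_iff, h]

variable [NonAssocRing R] [DecidableEq α]

/-- The matrix of the forward difference `u ↦ u ∘ σ - u` along a partial shift `σ`; its rows vanish
where `σ` is undefined, which is the Neumann boundary condition. -/
def forwardDifference (σ : α ≃. α) : Matrix α α R :=
  σ.toMatrix - Matrix.diagonal fun i => if (σ i).isSome then 1 else 0

theorem forwardDifference_mulVec_apply [Fintype α] (σ : α ≃. α) (u : α → R) (i : α) :
    (forwardDifference σ *ᵥ u) i = (σ i).elim 0 fun j => u j - u i := by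
  rw [forwardDifference, Matrix.sub_mulVec, Pi.sub_apply, toMatrix_mulVec_apply,
    Matrix.mulVec_diagonal]
  cases σ i <;> simp

theorem vecMul_forwardDifference_apply [Fintype α] (p : α → R) (σ : α ≃. α) (i : α) :
    (p ᵥ* forwardDifference σ) i =
      (σ.symm i).elim 0 p - (if (σ i).isSome then p i else 0) := by
  rw [forwardDifference, Matrix.vecMul_sub, Pi.sub_apply, vecMul_toMatrix_apply,
    Matrix.vecMul_diagonal, mul_ite, mul_one, mul_zero]

end ForwardDifference

section PixelGradient

/-- The partial shift `i ↦ i + 1` of `Fin n`, undefined at the last index. -/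
def succShift (n : ℕ) : Fin n ≃. Fin n where
  toFun i := if h : (i : ℕ) + 1 < n then some ⟨i + 1, h⟩ else none
  invFun i := if 0 < (i : ℕ) then some ⟨i - 1, (Nat.sub_le _ _).trans_lt i.isLt⟩ else none
  inv := by
    rintro ⟨i, hi⟩ ⟨j, hj⟩
    simp only [Option.ite_none_right_eq_some, Option.dite_none_right_eq_some,
      Option.some.injEq, Fin.mk.injEq, exists_prop]
    omega

theorem succShift_apply {n : ℕ} (i : Fin n) :
    succShift n i = if h : (i : ℕ) + 1 < n then some ⟨i + 1, h⟩ else none :=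
  rfl

theorem succShift_symm_apply {n : ℕ} (i : Fin n) :
    (succShift n).symm i =
      if 0 < (i : ℕ) then some ⟨i - 1, (Nat.sub_le _ _).trans_lt i.isLt⟩ else none :=
  rfl

variable {n m : ℕ}

/-- The matrix of the gradient `(∇ˣ, ∇ʸ)`, with `Sum.inl` and `Sum.inr` indexing the components. -/
def gradMatrix (n m : ℕ) : Matrix (Fin n × Fin m ⊕ Fin n × Fin m) (Fin n × Fin m) ℝ :=
  Matrix.fromRows (forwardDifference (prodPEquiv (succShift n) (PEquiv.refl _)))
    (forwardDifference (prodPEquiv (PEquiv.refl _) (succShift m)))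

/-- The matrix of the diagonal gradient `(∇^{xy}, ∇^{yx})`. -/
noncomputable def diagGradMatrix (n m : ℕ) :
    Matrix (Fin n × Fin m ⊕ Fin n × Fin m) (Fin n × Fin m) ℝ :=
  (√2)⁻¹ • Matrix.fromRows (forwardDifference (prodPEquiv (succShift n) (succShift m)))
    (forwardDifference (prodPEquiv (succShift n).symm (succShift m)))

theorem gradMatrix_mulVec (u : Fin n × Fin m → ℝ) :
    gradMatrix n m *ᵥ u = Sum.elim (gradX u) (gradY u) := by
  rw [gradMatrix, Matrix.fromRows_mulVec]
  congr 1 <;> funext q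
  · rw [forwardDifference_mulVec_apply, prodPEquiv_apply, succShift_apply, gradX]
    split_ifs <;> simp
  · rw [forwardDifference_mulVec_apply, prodPEquiv_apply, succShift_apply, gradY]
    split_ifs <;> simp

theorem diagGradMatrix_mulVec (u : Fin n × Fin m → ℝ) :
    diagGradMatrix n m *ᵥ u = Sum.elim (gradXY u) (gradYX u) := by
  rw [diagGradMatrix, Matrix.smul_mulVec, Matrix.fromRows_mulVec]
  ext (q | q)
  · simp only [Pi.smul_apply, Sum.elim_inl, forwardDifference_mulVec_apply, prodPEquiv_apply,
      succShift_apply, gradXY]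
    split_ifs <;> simp_all
  · simp only [Pi.smul_apply, Sum.elim_inr, forwardDifference_mulVec_apply, prodPEquiv_apply,
      succShift_apply, succShift_symm_apply, gradYX]
    split_ifs <;> simp_all

theorem sumElim_vecMul_gradMatrix (px py : Fin n × Fin m → ℝ) :
    Sum.elim px py ᵥ* gradMatrix n m = -divv px py := by
  rw [gradMatrix, Matrix.sumElim_vecMul_fromRows]
  funext q
  simp only [Pi.add_apply, Pi.neg_apply, vecMul_forwardDifference_apply, prodPEquiv_symm,
    prodPEquiv_apply, succShift_apply, succShift_symm_apply, PEquiv.symm_refl, PEquiv.refl_apply,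
    divv]
  by_cases hx : (q.1 : ℕ) + 1 < n <;> by_cases hy : (q.2 : ℕ) + 1 < m <;>
    by_cases hx' : 0 < (q.1 : ℕ) <;> by_cases hy' : 0 < (q.2 : ℕ) <;>
    simp [hx, hy, hx', hy'] <;> ring

theorem sumElim_vecMul_diagGradMatrix (px py : Fin n × Fin m → ℝ) :
    Sum.elim px py ᵥ* diagGradMatrix n m = -divv' px py := by
  rw [diagGradMatrix, Matrix.vecMul_smul, Matrix.sumElim_vecMul_fromRows]
  funext q
  simp only [Pi.smul_apply, Pi.add_apply, Pi.neg_apply, vecMul_forwardDifference_apply,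
    prodPEquiv_symm, prodPEquiv_apply, succShift_apply, succShift_symm_apply, PEquiv.symm_symm,
    smul_eq_mul, divv']
  rw [← mul_neg]
  congr 1
  by_cases hx : (q.1 : ℕ) + 1 < n <;> by_cases hy : (q.2 : ℕ) + 1 < m <;>
    by_cases hx' : 0 < (q.1 : ℕ) <;> by_cases hy' : 0 < (q.2 : ℕ) <;>
    simp [hx, hy, hx', hy'] <;> ring

end PixelGradient

section WeightedTV

variable {n m : ℕ}

/-- The matrix of minus all four directional gradients, so that `div` and `div'` together are the
action of its transpose. -/
noncomputable def negFullGradMatrix (n m : ℕ) :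
    Matrix ((Fin n × Fin m ⊕ Fin n × Fin m) ⊕ (Fin n × Fin m ⊕ Fin n × Fin m))
      (Fin n × Fin m) ℝ :=
  -Matrix.fromRows (gradMatrix n m) (diagGradMatrix n m)

/-- The weight `(lam / 2) g` repeated for each of the four directions. -/
noncomputable def directionalWeight (lam : ℝ) (g : Fin n × Fin m → ℝ) :
    (Fin n × Fin m ⊕ Fin n × Fin m) ⊕ (Fin n × Fin m ⊕ Fin n × Fin m) → ℝ :=
  (lam / 2) • Sum.elim (Sum.elim g g) (Sum.elim g g)

theorem sum_directionalWeight_mul_abs (lam : ℝ) (g u : Fin n × Fin m → ℝ) :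
    ∑ k, directionalWeight lam g k * |(negFullGradMatrix n m *ᵥ u) k| = lam * wTV g u := by
  simp only [negFullGradMatrix, Matrix.neg_mulVec, Matrix.fromRows_mulVec, gradMatrix_mulVec,
    diagGradMatrix_mulVec, directionalWeight, Fintype.sum_sum_type, Pi.smul_apply, Pi.neg_apply,
    abs_neg, Sum.elim_inl, Sum.elim_inr, smul_eq_mul, wTV, Finset.mul_sum,
    ← Finset.sum_add_distrib]
  exact Finset.sum_congr rfl fun q _ => by ring

theorem isSupportFunction_lam_mul_wTV {lam : ℝ} (hlam : 0 ≤ lam) {g : Fin n × Fin m → ℝ}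
    (hg : 0 ≤ g) :
    IsSupportFunction (dualBall (directionalWeight lam g) (negFullGradMatrix n m))
      (fun u => lam * wTV g (ofLp u)) := by
  have hweight : 0 ≤ directionalWeight lam g := by
    rintro ((q | q) | (q | q)) <;> exact mul_nonneg (div_nonneg hlam zero_le_two) (hg q)
  simpa only [sum_directionalWeight_mul_abs] using
    isSupportFunction_dualBall hweight (negFullGradMatrix n m)

theorem vecMul_negFullGradMatrix (lam : ℝ) (g ξx ξy ηx ηy : Fin n × Fin m → ℝ) :
    (directionalWeight lam g * Sum.elim (Sum.elim ξx ξy) (Sum.elim ηx ηy)) ᵥ*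
        negFullGradMatrix n m =
      (lam / 2) • (divv (g * ξx) (g * ξy) + divv' (g * ηx) (g * ηy)) := by
  have hfield : directionalWeight lam g * Sum.elim (Sum.elim ξx ξy) (Sum.elim ηx ηy) =
      (lam / 2) • Sum.elim (Sum.elim (g * ξx) (g * ξy)) (Sum.elim (g * ηx) (g * ηy)) := by
    ext ((q | q) | (q | q)) <;> simp [directionalWeight, mul_assoc]
  rw [hfield, Matrix.smul_vecMul, negFullGradMatrix, Matrix.vecMul_neg,
    Matrix.sumElim_vecMul_fromRows, sumElim_vecMul_gradMatrix, sumElim_vecMul_diagGradMatrix,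
    ← neg_add, neg_neg]

theorem toLp_mem_dualBall_iff (lam : ℝ) (g v : Fin n × Fin m → ℝ) :
    toLp 2 v ∈ dualBall (directionalWeight lam g) (negFullGradMatrix n m) ↔
      ∃ ξx ξy ηx ηy : Fin n × Fin m → ℝ,
        (∀ q, |ξx q| ≤ 1) ∧ (∀ q, |ξy q| ≤ 1) ∧ (∀ q, |ηx q| ≤ 1) ∧ (∀ q, |ηy q| ≤ 1) ∧
        v = (lam / 2) • (divv (g * ξx) (g * ξy) + divv' (g * ηx) (g * ηy)) := by
  simp only [dualBall, Set.mem_image, mem_closedBall_zero_iff,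
    pi_norm_le_iff_of_nonneg zero_le_one, Real.norm_eq_abs, (toLp_injective 2).eq_iff]
  constructor
  · rintro ⟨ξ, hξ, rfl⟩
    refine ⟨fun q => ξ (.inl (.inl q)), fun q => ξ (.inl (.inr q)), fun q => ξ (.inr (.inl q)),
      fun q => ξ (.inr (.inr q)), fun _ => hξ _, fun _ => hξ _, fun _ => hξ _, fun _ => hξ _, ?_⟩
    rw [← vecMul_negFullGradMatrix]
    congr 2
    ext ((q | q) | (q | q)) <;> rfl
  · rintro ⟨ξx, ξy, ηx, ηy, hξx, hξy, hηx, hηy, rfl⟩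
    refine ⟨Sum.elim (Sum.elim ξx ξy) (Sum.elim ηx ηy), ?_, vecMul_negFullGradMatrix ..⟩
    rintro ((q | q) | (q | q))
    exacts [hξx q, hξy q, hηx q, hηy q]

end WeightedTV

/-- The solution of the weighted ROF problem is obtained by subtracting from `w₀` its
projection onto the convex set `λK`. -/
theorem ROF_solution_via_projection (n m : ℕ) (hn : 1 ≤ n) (hm : 1 ≤ m)
    (g : Fin n × Fin m → ℝ) (hg : ∀ q, 0 ≤ g q)
    (lam : ℝ) (hlam : 0 < lam)
    (w₀ : Fin n × Fin m → ℝ)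
    (lamK : Set (Fin n × Fin m → ℝ))
    (hlamK : lamK = {v | ∃ ξx ξy ηx ηy : Fin n × Fin m → ℝ,
      (∀ q, |ξx q| ≤ 1) ∧ (∀ q, |ξy q| ≤ 1) ∧
      (∀ q, |ηx q| ≤ 1) ∧ (∀ q, |ηy q| ≤ 1) ∧
      v = fun q => (lam / 2) * (divv (fun r => g r * ξx r) (fun r => g r * ξy r) q +
        divv' (fun r => g r * ηx r) (fun r => g r * ηy r) q)})
    (vbar : Fin n × Fin m → ℝ) (hvbar : vbar ∈ lamK)
    (hnearest : ∀ v ∈ lamK,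
      ∑ q : Fin n × Fin m, (w₀ q - vbar q) ^ 2 ≤ ∑ q : Fin n × Fin m, (w₀ q - v q) ^ 2) :
    (∀ w : Fin n × Fin m → ℝ,
      wTV g (w₀ - vbar) + (1 / (2 * lam)) * ∑ q : Fin n × Fin m, ((w₀ - vbar) q - w₀ q) ^ 2 ≤
        wTV g w + (1 / (2 * lam)) * ∑ q : Fin n × Fin m, (w q - w₀ q) ^ 2) ∧
    (∀ w : Fin n × Fin m → ℝ,
      (∀ w' : Fin n × Fin m → ℝ,
        wTV g w + (1 / (2 * lam)) * ∑ q : Fin n × Fin m, (w q - w₀ q) ^ 2 ≤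
          wTV g w' + (1 / (2 * lam)) * ∑ q : Fin n × Fin m, (w' q - w₀ q) ^ 2) →
      w = w₀ - vbar) := by
  set K := dualBall (directionalWeight lam g) (negFullGradMatrix n m)
  have hmem (v : Fin n × Fin m → ℝ) : toLp 2 v ∈ K ↔ v ∈ lamK := by
    rw [hlamK]
    exact toLp_mem_dualBall_iff lam g v
  have hmin : IsMinOn (fun v => ‖toLp 2 w₀ - v‖) K (toLp 2 vbar) := fun v hv => by
    have hsq : ‖toLp 2 w₀ - toLp 2 vbar‖ ^ 2 ≤ ‖toLp 2 w₀ - v‖ ^ 2 := by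
      simpa only [EuclideanSpace.real_norm_sq_eq, ofLp_sub, Pi.sub_apply] using
        hnearest (ofLp v) ((hmem _).1 hv)
    exact (pow_le_pow_iff_left₀ (norm_nonneg _) (norm_nonneg _) two_ne_zero).1 hsq
  obtain ⟨hle, huniq⟩ := (isSupportFunction_lam_mul_wTV hlam.le hg).sub_isMin_and_unique hlam
    (convex_dualBall _ _) ((hmem vbar).2 hvbar) hmin
  simp only [EuclideanSpace.real_norm_sq_eq] at hle huniq
  exact ⟨fun w => hle (toLp 2 w),
    fun w hw => toLp_injective 2 (huniq (toLp 2 w) fun z => hw (ofLp z))⟩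
end
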